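/- arXiv:2104.06501 — 2 statements merged into one kernel-verified Lean document; each statement's English description precedes it below -/
import Mathlib

section
/- Let F be a field, let h be a positive integer, and let φ = c₁x₁ + ⋯ + c_hx_h be an h-ary linear form with all coefficients cᵢ ∈ F nonzero. Let A be a subset of F with |A| ≥ 2, let a₀, a₁ ∈ A with a₀ ≠ a₁, and let A′ = {(a − a₀)/(a₁ − a₀) : a ∈ A}. Then A is a φ-Sidon set if and only if A′ is a φ-Sidon set. -/
/-!
A linear form `φ` satisfies `φ (f x) = f.linear (φ x) + φ (f 0)` for an affine map `f` applied
coordinatewise. When `f` is injective so is `f.linear`, so the collisions of `φ` on `A` and on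
`f '' A` correspond. The set `A` is the image of its normalization `A′` under the injective affine
map `AffineMap.lineMap a₀ a₁`.
-/

open AffineMap Function

section AffineInvariance

variable {R M N ι : Type*} [Ring R] [AddCommGroup M] [Module R M] [AddCommGroup N] [Module R N]
  [Fintype ι]

/-- `A` is a Sidon set for the linear form `φ x = ∑ i, c i • x i`: `φ` is one-to-one on `A ^ ι`.
The coefficients are scalars while `A` may lie in any module, and `A` is allowed to be empty. -/
def IsSidonFor (c : ι → R) (A : Set M) : Prop :=
  Set.InjOn (fun x : ι → M => ∑ i, c i • x i) (Set.univ.pi fun _ => A)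

theorem isSidonFor_iff {c : ι → R} {A : Set M} :
    IsSidonFor c A ↔ ∀ x y : ι → M, (∀ i, x i ∈ A) → (∀ i, y i ∈ A) →
      ∑ i, c i • x i = ∑ i, c i • y i → x = y := by
  simp only [IsSidonFor, Set.InjOn, Set.mem_univ_pi]
  exact ⟨fun H x y hx hy => H hx hy, fun H x hx y hy => H x y hx hy⟩

theorem sum_smul_affineMap_apply (f : M →ᵃ[R] N) (c : ι → R) (x : ι → M) :
    ∑ i, c i • f (x i) = f.linear (∑ i, c i • x i) + (∑ i, c i) • f 0 := by
  rw [f.decomp]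
  simp only [Pi.add_apply, map_zero, zero_add, smul_add, Finset.sum_add_distrib, map_sum, map_smul,
    Finset.sum_smul]

theorem isSidonFor_image_affineMap_iff {f : M →ᵃ[R] N} (hf : Injective f) {c : ι → R}
    {A : Set M} : IsSidonFor c (f '' A) ↔ IsSidonFor c A := by
  have map_injective : Injective (Pi.map fun _ : ι => f) := Injective.piMap fun _ => hf
  have linear_injective : Injective f.linear := f.linear_injective_iff.mpr hf
  have collision_iff (x y : ι → M) :
      ∑ i, c i • f (x i) = ∑ i, c i • f (y i) ↔ ∑ i, c i • x i = ∑ i, c i • y i := by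
    rw [sum_smul_affineMap_apply, sum_smul_affineMap_apply, add_left_inj, linear_injective.eq_iff]
  rw [IsSidonFor, ← Set.piMap_image_univ_pi, ← map_injective.injOn.comp_iff]
  simp only [IsSidonFor, Set.InjOn, comp_apply, Pi.map_apply, collision_iff]

end AffineInvariance

theorem lineMap_image_normalized {F : Type*} [DivisionRing F] {a₀ a₁ : F} (hne : a₀ ≠ a₁)
    (A : Set F) :
    lineMap (k := F) a₀ a₁ '' ((fun a => (a - a₀) / (a₁ - a₀)) '' A) = A := by
  have hd : a₁ - a₀ ≠ 0 := sub_ne_zero.mpr hne.symm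
  simp only [Set.image_image, lineMap_apply_ring', div_mul_cancel₀ _ hd, sub_add_cancel,
    Set.image_id']

theorem sidon_iff_sidon_normalized_general {F ι : Type*} [DivisionRing F] [Fintype ι]
    (c : ι → F) (A : Set F) {a₀ a₁ : F} (hne : a₀ ≠ a₁) :
    IsSidonFor c A ↔ IsSidonFor c ((fun a => (a - a₀) / (a₁ - a₀)) '' A) := by
  rw [← isSidonFor_image_affineMap_iff (A := _ '' A) (lineMap_injective F hne),
    lineMap_image_normalized hne]

/-- Let `A ⊆ F` with `|A| ≥ 2`, let `a₀ ≠ a₁` in `A`, and let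
`A′ = {(a − a₀)/(a₁ − a₀) : a ∈ A}`. Then `A` is a Sidon set for the linear form
`φ = c₁x₁ + ⋯ + c_hx_h` (all `cᵢ ≠ 0`) if and only if `A′` is. -/
theorem sidon_iff_sidon_normalized
    (F : Type*) [Field F] (h : ℕ) (hh : 0 < h) (c : Fin h → F) (hc : ∀ i, c i ≠ 0)
    (A : Set F) (hcard : 2 ≤ A.ncard)
    (a₀ a₁ : F) (ha₀ : a₀ ∈ A) (ha₁ : a₁ ∈ A) (hne : a₀ ≠ a₁)
    (A' : Set F) (hA' : A' = (fun a => (a - a₀) / (a₁ - a₀)) '' A) :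
    (∀ a a' : Fin h → F, (∀ i, a i ∈ A) → (∀ i, a' i ∈ A) →
        ∑ i, c i * a i = ∑ i, c i * a' i → a = a') ↔
      (∀ a a' : Fin h → F, (∀ i, a i ∈ A') → (∀ i, a' i ∈ A') →
        ∑ i, c i * a i = ∑ i, c i * a' i → a = a') := by
  subst hA'
  exact isSidonFor_iff.symm.trans <|
    (sidon_iff_sidon_normalized_general c A hne).trans isSidonFor_iff
end

section
/- Let A be a nonempty subset of a field F and let c ∈ F \ {0}. If c ∈ E(A), then E(c) = {c, −c, 1/c, −1/c} ⊆ E(A); equivalently, A is a Sidon set for one of the binary forms x₁ + cx₂, x₁ − cx₂, x₁ + (1/c)x₂, x₁ − (1/c)x₂ if and only if A is a Sidon set for all four of them. -/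
/-!
The equation `a₁ + c * a₂ = a₁' + c * a₂'` says `a₁ - a₁' = c * (a₂' - a₂)`, so the exceptional
set of `A` is the set of ratios of nonzero differences of elements of `A`. Exchanging the two
elements of a difference negates a ratio, and exchanging the two differences inverts it.
-/

/-- The exceptional set `E(A)`: the set of nonzero `c` such that `A` is not a Sidon set for
the binary linear form `x₁ + cx₂`. -/
def sidonExceptionalSet {F : Type*} [Field F] (A : Set F) : Set F :=
  {c : F | c ≠ 0 ∧ ¬ (∀ a₁ ∈ A, ∀ a₂ ∈ A, ∀ a₁' ∈ A, ∀ a₂' ∈ A,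
    a₁ + c * a₂ = a₁' + c * a₂' → a₁ = a₁' ∧ a₂ = a₂')}

open scoped Pointwise

/-- The nonzero differences of elements of `A`, whose ratios are the coefficients `c` for which
`A` is not a Sidon set for `x₁ + cx₂`. -/
def nonzeroDifferences {G : Type*} [AddGroup G] (A : Set G) : Set G :=
  (A - A) \ {0}

theorem sub_mem_nonzeroDifferences {G : Type*} [AddGroup G] {A : Set G} {a b : G}
    (ha : a ∈ A) (hb : b ∈ A) (hab : a ≠ b) : a - b ∈ nonzeroDifferences A :=
  ⟨Set.sub_mem_sub ha hb, sub_ne_zero.mpr hab⟩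

theorem neg_nonzeroDifferences {G : Type*} [AddGroup G] (A : Set G) :
    -nonzeroDifferences A = nonzeroDifferences A := by
  rw [nonzeroDifferences, ← Set.neg_preimage, Set.preimage_sdiff, Set.neg_preimage,
    Set.neg_preimage, neg_sub, Set.neg_singleton, neg_zero]

section Field

variable {F : Type*} [Field F]

theorem sidonExceptionalSet_eq_div (A : Set F) :
    sidonExceptionalSet A = nonzeroDifferences A / nonzeroDifferences A := by
  ext c
  constructor
  · rintro ⟨hc, hA⟩
    push Not at hA
    obtain ⟨a₁, ha₁, a₂, ha₂, a₁', ha₁', a₂', ha₂', heq, hne⟩ := hA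
    have hsub : a₁ - a₁' = c * (a₂' - a₂) := by linear_combination heq
    have hiff : a₁ = a₁' ↔ a₂' = a₂ := by
      rw [← sub_eq_zero, hsub, mul_eq_zero_iff_left hc, sub_eq_zero]
    have hne₂ : a₂' ≠ a₂ := fun h => hne (hiff.mpr h) h.symm
    have hne₁ : a₁ ≠ a₁' := hne₂ ∘ hiff.mp
    exact ⟨a₁ - a₁', sub_mem_nonzeroDifferences ha₁ ha₁' hne₁,
      a₂' - a₂, sub_mem_nonzeroDifferences ha₂' ha₂ hne₂,
      (div_eq_iff (sub_ne_zero.mpr hne₂)).mpr hsub⟩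
  · rintro ⟨_, ⟨⟨a₁, ha₁, a₁', ha₁', rfl⟩, hne₁⟩, _, ⟨⟨a₂', ha₂', a₂, ha₂, rfl⟩, hne₂⟩, rfl⟩
    refine ⟨div_ne_zero hne₁ hne₂, fun hSidon => sub_ne_zero.mp hne₁ ?_⟩
    have hsub : (a₁ - a₁') / (a₂' - a₂) * (a₂' - a₂) = a₁ - a₁' := div_mul_cancel₀ _ hne₂
    exact (hSidon a₁ ha₁ a₂ ha₂ a₁' ha₁' a₂' ha₂' (by linear_combination -hsub)).1

theorem neg_mem_sidonExceptionalSet_iff {A : Set F} {c : F} :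
    -c ∈ sidonExceptionalSet A ↔ c ∈ sidonExceptionalSet A := by
  rw [← Set.mem_neg, sidonExceptionalSet_eq_div, ← neg_div, neg_nonzeroDifferences]

theorem inv_mem_sidonExceptionalSet_iff {A : Set F} {c : F} :
    c⁻¹ ∈ sidonExceptionalSet A ↔ c ∈ sidonExceptionalSet A := by
  rw [← Set.mem_inv, sidonExceptionalSet_eq_div, inv_div]

end Field

/-- If `c ∈ E(A)` (with `c ≠ 0` and `A` nonempty), then
`E(c) = {c, −c, 1/c, −1/c} ⊆ E(A)`. -/
theorem exceptional_closed_under_neg_inv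
    (F : Type*) [Field F] (A : Set F) (hA : A.Nonempty) (c : F) (hc : c ≠ 0)
    (hcE : c ∈ sidonExceptionalSet A) :
    ({c, -c, c⁻¹, -c⁻¹} : Set F) ⊆ sidonExceptionalSet A := by
  rintro x (rfl | rfl | rfl | rfl)
  · exact hcE
  · exact neg_mem_sidonExceptionalSet_iff.mpr hcE
  · exact inv_mem_sidonExceptionalSet_iff.mpr hcE
  · exact neg_mem_sidonExceptionalSet_iff.mpr (inv_mem_sidonExceptionalSet_iff.mpr hcE)
end
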